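/- Let G~ be a mixed graph whose underlying graph G has no pendant vertices and no isolated vertices, with κ(G) = c(G) − 1 and c(G) ≥ 2. If r(G~) = 2m(G) − 2κ(G) + s for some s ∈ {0,1}, then either G has a perfect matching or G has a connected component that is an odd cycle. -/

import Mathlib

open scoped Classical

namespace MixedPaper

universe u

/-- A mixed graph: a finite simple graph together with an orientation of a subset
of its edges.  `arc u v = true` means there is an arc from `u` to `v`. -/
structure MixedGraph (V : Type u) where
  graph : SimpleGraph V
  arc : V → V → Bool
  arc_adj : ∀ u v, arc u v → graph.Adj u v
  arc_antisymm : ∀ u v, arc u v → ¬ arc v u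

variable {V : Type u}

/-- The Hermitian adjacency matrix of a mixed graph. -/
noncomputable def MixedGraph.hMatrix [Fintype V] [DecidableEq V] (M : MixedGraph V) :
    Matrix V V ℂ := fun u v =>
  if M.arc u v then Complex.I
  else if M.arc v u then -Complex.I
  else if M.graph.Adj u v then 1 else 0

/-- The H-rank of a mixed graph: the rank of its Hermitian adjacency matrix. -/
noncomputable def MixedGraph.hRank [Fintype V] [DecidableEq V] (M : MixedGraph V) : ℕ :=
  M.hMatrix.rank

/-- The matching number of a simple graph. -/
noncomputable def matchingNumber (G : SimpleGraph V) : ℕ :=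
  sSup {k | ∃ N : G.Subgraph, N.IsMatching ∧ N.edgeSet.ncard = k}

/-- A subgraph is a cycle subgraph if it is connected and every one of its vertices
has exactly two neighbours in it. -/
def IsCycleSubgraph {G : SimpleGraph V} (C : G.Subgraph) : Prop :=
  C.Connected ∧ ∀ v ∈ C.verts, {w | C.Adj v w}.ncard = 2

/-- κ(G) : the number of even cycles of G. -/
noncomputable def evenCycleCount (G : SimpleGraph V) : ℕ :=
  {C : G.Subgraph | IsCycleSubgraph C ∧ Even C.verts.ncard}.ncard

/-- c(G) = |E(G)| - |V(G)| + ω(G), the cyclomatic number. -/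
noncomputable def cyclomatic [Fintype V] (G : SimpleGraph V) : ℤ :=
  (G.edgeSet.ncard : ℤ) - (Fintype.card V : ℤ) + (Nat.card G.ConnectedComponent : ℤ)

/-- The induced mixed subgraph on a set of vertices. -/
def MixedGraph.induce (M : MixedGraph V) (S : Set V) : MixedGraph S where
  graph := M.graph.induce S
  arc := fun a b => M.arc a.1 b.1
  arc_adj := fun a b h => M.arc_adj a.1 b.1 h
  arc_antisymm := fun a b h => M.arc_antisymm a.1 b.1 h

/-- The mixed subgraph induced by a connected component of the underlying graph. -/
def MixedGraph.comp (M : MixedGraph V) (c : M.graph.ConnectedComponent) :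
    MixedGraph c.supp := M.induce c.supp

/-- The signature |f - b| of a closed walk in a mixed graph: the absolute difference
between the numbers of forward and backward arcs along the walk. -/
def walkSignature (M : MixedGraph V) {u : V} (w : M.graph.Walk u u) : ℕ :=
  ((w.darts.countP fun d => M.arc d.toProd.1 d.toProd.2 : ℤ) -
    (w.darts.countP fun d => M.arc d.toProd.2 d.toProd.1 : ℤ)).natAbs

/-- The signature of the cycle subgraph `C` of the mixed graph `M` satisfies the
predicate `P` (expressed via a closed walk traversing `C`; the signature does not
depend on the choice of traversal). -/
def CycleSig (M : MixedGraph V) (C : M.graph.Subgraph) (P : ℕ → Prop) : Prop :=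
  ∃ (u : V) (w : M.graph.Walk u u), w.IsCycle ∧
    {v | v ∈ w.support} = C.verts ∧ {e | e ∈ w.edges} = C.edgeSet ∧
    P (walkSignature M w)

/-- `C` is a pendant cycle with unique vertex `x` of degree 3. -/
def IsPendantCycle (G : SimpleGraph V) (C : G.Subgraph) (x : V) : Prop :=
  IsCycleSubgraph C ∧ x ∈ C.verts ∧ {w | G.Adj x w}.ncard = 3 ∧
    ∀ v ∈ C.verts, v ≠ x → {w | G.Adj v w}.ncard = 2

/-- G has no pendant vertices (vertices of degree 1). -/
def NoPendantVerts (G : SimpleGraph V) : Prop := ∀ u : V, {w | G.Adj u w}.ncard ≠ 1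

/-- The (distinct) cycles of G are pairwise vertex-disjoint. -/
def CyclesVertexDisjoint (G : SimpleGraph V) : Prop :=
  ∀ C₁ C₂ : G.Subgraph, IsCycleSubgraph C₁ → IsCycleSubgraph C₂ → C₁ ≠ C₂ →
    Disjoint C₁.verts C₂.verts

/-- The (distinct) even cycles of G are pairwise vertex-disjoint. -/
def EvenCyclesVertexDisjoint (G : SimpleGraph V) : Prop :=
  ∀ C₁ C₂ : G.Subgraph, IsCycleSubgraph C₁ → IsCycleSubgraph C₂ →
    Even C₁.verts.ncard → Even C₂.verts.ncard → C₁ ≠ C₂ →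
    Disjoint C₁.verts C₂.verts

/-- One pendant `K₂` deletion step, recorded on the surviving vertex sets:
`u` is pendant in the graph induced on `S` with unique neighbour `v` there,
and both are deleted. -/
def PendantStep (G : SimpleGraph V) (S T : Set V) : Prop :=
  ∃ u v, u ∈ S ∧ v ∈ S ∧ {w | w ∈ S ∧ G.Adj u w} = {v} ∧ T = S \ {u, v}

/-- `S` is reachable from the full vertex set by a sequence of pendant K₂ deletions. -/
def PendantReaches (G : SimpleGraph V) (S : Set V) : Prop :=
  Relation.ReflTransGen (PendantStep G) Set.univ S

/-- The graph induced on `S` has no pendant vertices. -/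
def NoPendantIn (G : SimpleGraph V) (S : Set V) : Prop :=
  ∀ u ∈ S, {w | w ∈ S ∧ G.Adj u w}.ncard ≠ 1

/-- `u` lies on some even cycle of `G`. -/
def OnEvenCycle (G : SimpleGraph V) (u : V) : Prop :=
  ∃ C : G.Subgraph, IsCycleSubgraph C ∧ Even C.verts.ncard ∧ u ∈ C.verts

/-- G is the graph ∞(p,1,q): two cycles of lengths p and q sharing exactly one vertex. -/
def IsInfinityGraph (G : SimpleGraph V) (p q : ℕ) : Prop :=
  ∃ C₁ C₂ : G.Subgraph, IsCycleSubgraph C₁ ∧ IsCycleSubgraph C₂ ∧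
    C₁.verts.ncard = p ∧ C₂.verts.ncard = q ∧
    (C₁.verts ∩ C₂.verts).ncard = 1 ∧ C₁ ⊔ C₂ = ⊤

/-- G is the theta graph θ(p,l,q): three internally disjoint paths with p, l, q
vertices respectively, joining two common endvertices. -/
def IsThetaGraph (G : SimpleGraph V) (p l q : ℕ) : Prop :=
  2 ≤ p ∧ 2 ≤ l ∧ 2 ≤ q ∧ ¬(p = 2 ∧ l = 2) ∧ ¬(p = 2 ∧ q = 2) ∧ ¬(l = 2 ∧ q = 2) ∧
  ∃ (a b : V) (W₁ W₂ W₃ : G.Walk a b), W₁.IsPath ∧ W₂.IsPath ∧ W₃.IsPath ∧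
    W₁.length = p - 1 ∧ W₂.length = l - 1 ∧ W₃.length = q - 1 ∧
    (∀ v : V, v ∈ W₁.support ∨ v ∈ W₂.support ∨ v ∈ W₃.support) ∧
    (∀ e ∈ G.edgeSet, e ∈ W₁.edges ∨ e ∈ W₂.edges ∨ e ∈ W₃.edges) ∧
    {v | v ∈ W₁.support ∧ v ∈ W₂.support} = {a, b} ∧
    {v | v ∈ W₁.support ∧ v ∈ W₃.support} = {a, b} ∧
    {v | v ∈ W₂.support ∧ v ∈ W₃.support} = {a, b}

/-- Every odd cycle of `M` has signature satisfying `P`. -/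
def OddCyclesSig (M : MixedGraph V) (P : ℕ → Prop) : Prop :=
  ∀ C : M.graph.Subgraph, IsCycleSubgraph C → Odd C.verts.ncard → CycleSig M C P

/-- Every even cycle of `M`, of length `n`, has signature `s` satisfying `P n s`. -/
def EvenCyclesSig (M : MixedGraph V) (P : ℕ → ℕ → Prop) : Prop :=
  ∀ C : M.graph.Subgraph, IsCycleSubgraph C → Even C.verts.ncard →
    CycleSig M C (P C.verts.ncard)

/-- The whole mixed graph is a single cycle. -/
def IsCycleMG (M : MixedGraph V) : Prop := IsCycleSubgraph (⊤ : M.graph.Subgraph)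

/-- The family 𝔊₀. -/
def MemG0 [Fintype V] [DecidableEq V] (M : MixedGraph V) : Prop :=
  M.graph.Connected ∧ 1 ≤ cyclomatic M.graph ∧ CyclesVertexDisjoint M.graph ∧
  NoPendantVerts M.graph ∧
  ∃ (C : M.graph.Subgraph) (x : V), IsPendantCycle M.graph C x ∧ Odd C.verts.ncard ∧
    CycleSig M C Odd ∧
    ((M.induce (C.vertsᶜ ∪ {x})).hRank : ℤ) =
      2 * (matchingNumber (M.induce (C.vertsᶜ ∪ {x})).graph : ℤ) -
        2 * cyclomatic (M.induce (C.vertsᶜ ∪ {x})).graph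

/-- The family 𝔛₁ : mixed ∞(p,1,q)-graphs, p even, q odd, whose odd cycle has odd
signature and whose even cycle C̃_p satisfies σ ≡ p (mod 4). -/
def MemX1 (M : MixedGraph V) : Prop :=
  ∃ p q : ℕ, Even p ∧ Odd q ∧ IsInfinityGraph M.graph p q ∧
    OddCyclesSig M Odd ∧ EvenCyclesSig M (fun n s => s % 4 = n % 4)

/-- The family 𝔛₂ : mixed θ(p,l,q)-graphs, p even, l q odd, whose two odd cycles have odd
signatures and whose even cycle C̃_{q+l-2} satisfies q + l + σ ≡ 2 (mod 4). -/
def MemX2 (M : MixedGraph V) : Prop :=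
  ∃ p l q : ℕ, Even p ∧ Odd l ∧ Odd q ∧ IsThetaGraph M.graph p l q ∧
    OddCyclesSig M Odd ∧ EvenCyclesSig M (fun _ s => (q + l + s) % 4 = 2)

/-- The family 𝔊₂ = 𝔊₀ ∪ 𝔛₁ ∪ 𝔛₂ together with the mixed odd cycles of odd signature. -/
def MemG2 [Fintype V] [DecidableEq V] (M : MixedGraph V) : Prop :=
  MemG0 M ∨ MemX1 M ∨ MemX2 M ∨
    (IsCycleMG M ∧ Odd (Nat.card V) ∧ CycleSig M ⊤ Odd)

/-- The family 𝔜₁. -/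
def MemY1 (M : MixedGraph V) : Prop :=
  ∃ p q : ℕ, Even p ∧ Odd q ∧ IsInfinityGraph M.graph p q ∧
    OddCyclesSig M Even ∧ EvenCyclesSig M (fun n s => s % 4 = n % 4)

/-- The family 𝔜₂. -/
def MemY2 (M : MixedGraph V) : Prop :=
  ∃ p l q : ℕ, Even p ∧ Odd l ∧ Odd q ∧ IsThetaGraph M.graph p l q ∧
    OddCyclesSig M Even ∧ EvenCyclesSig M (fun _ s => (q + l + s) % 4 = 2)

/-- `M` is a disjoint union of `k` even cycles and one odd cycle with even signature. -/
def IsDisjointUnionEvenCyclesOddCycleEvenSig (M : MixedGraph V) (k : ℤ) : Prop :=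
  (∀ c : M.graph.ConnectedComponent, IsCycleMG (M.comp c)) ∧
  (({c : M.graph.ConnectedComponent | Even (Nat.card c.supp)}.ncard : ℤ) = k) ∧
  (∃! c : M.graph.ConnectedComponent, Odd (Nat.card c.supp)) ∧
  (∀ c : M.graph.ConnectedComponent, Odd (Nat.card c.supp) →
    CycleSig (M.comp c) ⊤ Even)

/-- The family 𝔉₀. -/
def MemF0 [Fintype V] [DecidableEq V] (M : MixedGraph V) : Prop :=
  M.graph.Connected ∧ 2 ≤ cyclomatic M.graph ∧ CyclesVertexDisjoint M.graph ∧
  NoPendantVerts M.graph ∧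
  (∃ (C₀ : M.graph.Subgraph) (x₀ : V), IsPendantCycle M.graph C₀ x₀ ∧ Odd C₀.verts.ncard ∧
    CycleSig M C₀ Even ∧
    ∀ C : M.graph.Subgraph, IsCycleSubgraph C → C ≠ C₀ →
      Even C.verts.ncard ∧ CycleSig M C (fun s => s % 4 = C.verts.ncard % 4)) ∧
  (∃ (Cq : M.graph.Subgraph) (x : V), IsPendantCycle M.graph Cq x ∧ Even Cq.verts.ncard ∧
    ∃ S : Set ↥(Cq.vertsᶜ ∪ {x}),
      PendantReaches (M.induce (Cq.vertsᶜ ∪ {x})).graph S ∧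
      NoPendantIn (M.induce (Cq.vertsᶜ ∪ {x})).graph S ∧
      IsDisjointUnionEvenCyclesOddCycleEvenSig
        ((M.induce (Cq.vertsᶜ ∪ {x})).induce S)
        (cyclomatic (M.induce (Cq.vertsᶜ ∪ {x})).graph))

/-- The family 𝔉₂ = 𝔉₀ ∪ 𝔜₁ ∪ 𝔜₂ together with the mixed odd cycles of even signature. -/
def MemF2 [Fintype V] [DecidableEq V] (M : MixedGraph V) : Prop :=
  MemF0 M ∨ MemY1 M ∨ MemY2 M ∨
    (IsCycleMG M ∧ Odd (Nat.card V) ∧ CycleSig M ⊤ Even)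

/-- A connected component that is either an even cycle C̃_q with σ ≡ q (mod 4),
or an isolated vertex. -/
def GoodOtherComp (M : MixedGraph V) : Prop :=
  (IsCycleMG M ∧ Even (Nat.card V) ∧
    CycleSig M ⊤ (fun s => s % 4 = (Nat.card V) % 4)) ∨
  Nat.card V = 1

/-- A fractional matching of `G`, given as a weight function on `Sym2 V` vanishing
outside the edge set. -/
def IsFracMatching [Fintype V] [DecidableEq V] (G : SimpleGraph V) (f : Sym2 V → ℝ) : Prop :=
  (∀ e ∈ G.edgeSet, 0 ≤ f e ∧ f e ≤ 1) ∧ (∀ e, e ∉ G.edgeSet → f e = 0) ∧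
    ∀ v : V, ∑ e ∈ Finset.univ.filter (fun e : Sym2 V => v ∈ e), f e ≤ 1

/-- The fractional matching number m*(G). -/
noncomputable def fracMatchingNumber [Fintype V] [DecidableEq V] (G : SimpleGraph V) : ℝ :=
  sSup {x : ℝ | ∃ f : Sym2 V → ℝ, IsFracMatching G f ∧ ∑ e : Sym2 V, f e = x}

/-- Membership in the family ℱ : fractional matchings of total weight m*(G) taking
values in {0, 1/2, 1}. -/
def InOptFamily [Fintype V] [DecidableEq V] (G : SimpleGraph V) (f : Sym2 V → ℝ) : Prop :=
  IsFracMatching G f ∧ (∑ e : Sym2 V, f e) = fracMatchingNumber G ∧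
    ∀ e : Sym2 V, f e = 0 ∨ f e = 1 / 2 ∨ f e = 1

/-- An optimal fractional matching: a member of ℱ with the largest number of
edges of weight 1. -/
def IsOptFracMatching [Fintype V] [DecidableEq V] (G : SimpleGraph V) (f : Sym2 V → ℝ) : Prop :=
  InOptFamily G f ∧
    ∀ g : Sym2 V → ℝ, InOptFamily G g →
      {e : Sym2 V | g e = 1}.ncard ≤ {e : Sym2 V | f e = 1}.ncard

/-- E₁(C) : the edges of `G` with exactly one endpoint on the cycle `C`. -/
def cutEdges (G : SimpleGraph V) (C : G.Subgraph) : Set (Sym2 V) :=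
  {e | e ∈ G.edgeSet ∧ ∃ a b : V, e = s(a, b) ∧ a ∈ C.verts ∧ b ∉ C.verts}

/-!
The Hermitian adjacency matrix has entries in `ℤ[i]` and reduces modulo `1 + i` to the adjacency
matrix of `G` over `ZMod 2`, whose determinant is the parity of the number of perfect matchings.
A matching `N` whose vertices contain no even cycle of `G` is the only perfect matching of the
graph induced on them, since the symmetric difference of two perfect matchings consists of even
cycles; hence `2|N| ≤ r`. Deleting from a maximum matching the edges that meet a transversal `X` of
the even cycles gives `2m ≤ r + 2|X|`, where only the vertices of `X` covered by the matching count.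
As `r ≤ 2m - 2κ + 1`, at least `κ` vertices of every transversal are covered by every maximum
matching, so the even cycles are pairwise disjoint and avoid the inessential vertices, those missed
by some maximum matching.

If `G` has no perfect matching, let `F` be the graph of the edges with an inessential end. All its
nonzero degrees are at least two, and it shares no edge with the `κ ≥ c(G) - 1` edge-disjoint even
cycles, so its cyclomatic number is at most one and its edges form a single cycle. That cycle
contains an inessential vertex, hence is odd, hence has two adjacent inessential vertices. By the
exchange property of maximum matchings inessentiality then spreads to every vertex of the cycle,
which is therefore a connected component of `G`.
-/

open Finset SimpleGraph
open scoped symmDiff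

theorem sum_ncard_neighborSet [Fintype V] (G : SimpleGraph V) :
    ∑ v, (G.neighborSet v).ncard = 2 * G.edgeSet.ncard := by
  simp only [Set.ncard_eq_toFinset_card', Set.toFinset_card, card_neighborSet_eq_degree]
  rw [G.sum_degrees_eq_twice_card_edges, edgeFinset_card]

theorem ncard_neighborSet_toSimpleGraph {G : SimpleGraph V} (c : G.ConnectedComponent)
    (v : c) : (c.toSimpleGraph.neighborSet v).ncard = (G.neighborSet v).ncard := by
  rw [← Set.ncard_image_of_injective _ Subtype.val_injective]
  congr 1
  ext w
  refine ⟨?_, fun h => ⟨⟨w, (c.mem_supp_congr_adj h).1 v.2⟩, h, rfl⟩⟩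
  rintro ⟨w, hw, rfl⟩
  exact hw

theorem ncard_edgeSet_add_card_connectedComponent [Fintype V] {T : SimpleGraph V}
    (hT : T.IsAcyclic) :
    T.edgeSet.ncard + Nat.card T.ConnectedComponent = Fintype.card V := by
  have hsupp (c : T.ConnectedComponent) :
      ∑ v : c, (T.neighborSet v).ncard + 2 = 2 * Fintype.card c := by
    simp only [← ncard_neighborSet_toSimpleGraph c, sum_ncard_neighborSet]
    have htree := (hT.isTree_connectedComponent c).card_edgeFinset
    rw [edgeFinset, ← Set.ncard_eq_toFinset_card'] at htree
    lia
  have hsum (f : V → ℕ) : ∑ c : T.ConnectedComponent, ∑ v : c, f v = ∑ v, f v := by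
    simp only [← sum_fiberwise univ T.connectedComponentMk f]
    exact Fintype.sum_congr _ _ fun c => (sum_subtype _ (fun _ => mem_filter_univ _) f).symm
  have hadd := Fintype.sum_congr _ _ hsupp
  have hcard := hsum fun _ => 1
  simp only [sum_add_distrib, ← mul_sum, sum_const, card_univ, smul_eq_mul, mul_one] at hadd hcard
  rw [hsum (fun v => (T.neighborSet v).ncard), sum_ncard_neighborSet, hcard] at hadd
  rw [Nat.card_eq_fintype_card]
  lia

theorem exists_isAcyclic_reachable_eq_inf_eq {F G T : SimpleGraph V}
    (hFG : F ≤ G) (hTF : T ≤ F) (hT : T.IsAcyclic) (hreach : T.Reachable = F.Reachable) :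
    ∃ T' ≤ G, T'.IsAcyclic ∧ T'.Reachable = G.Reachable ∧ T' ⊓ F = T := by
  obtain ⟨T', hTT', hT'G, hT', hreach'⟩ :=
    exists_isAcyclic_reachable_eq_le_of_le_of_isAcyclic (hTF.trans hFG) hT
  refine ⟨T', hT'G, hT', hreach', ?_⟩
  have hmax := (maximal_isAcyclic_iff_reachable_eq hTF hT).2 hreach
  exact (hmax.eq_of_le ⟨inf_le_right, hT'.anti inf_le_left⟩ (le_inf hTT' hTF)).symm

theorem card_connectedComponent_eq_of_reachable_eq {G H : SimpleGraph V}
    (h : G.Reachable = H.Reachable) :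
    Nat.card G.ConnectedComponent = Nat.card H.ConnectedComponent := by
  unfold ConnectedComponent
  rw [h]

theorem cyclomatic_eq_ncard_edgeSet_sdiff [Fintype V] {G T : SimpleGraph V} (hTG : T ≤ G)
    (hT : T.IsAcyclic) (hreach : T.Reachable = G.Reachable) :
    cyclomatic G = (G \ T).edgeSet.ncard := by
  have hcard := ncard_edgeSet_add_card_connectedComponent hT
  have hdiff := Set.ncard_sdiff_add_ncard_of_subset (edgeSet_mono hTG)
  rw [cyclomatic, ← hcard, card_connectedComponent_eq_of_reachable_eq hreach, edgeSet_sdiff,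
    ← hdiff]
  push_cast
  ring

/-- A spanning forest of `F` extends to one of `G`, and the edges outside the latter count the
independent cycles. -/
theorem cyclomatic_add_card_le [Fintype V] {ι : Type*} {F G : SimpleGraph V} (hFG : F ≤ G)
    {s : Finset ι} {K : ι → SimpleGraph V} (hKG : ∀ i ∈ s, K i ≤ G)
    (hK : ∀ i ∈ s, ¬ (K i).IsAcyclic) (hdisj : (s : Set ι).PairwiseDisjoint K)
    (hFK : ∀ i ∈ s, Disjoint F (K i)) :
    cyclomatic F + s.card ≤ cyclomatic G := by
  obtain ⟨T, hTF, hT, hreach⟩ := F.exists_isAcyclic_reachable_eq_le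
  obtain ⟨T', hT'G, hT', hreach', rfl⟩ :=
    exists_isAcyclic_reachable_eq_inf_eq hFG hTF hT hreach
  have hedge (i : s) : ∃ e ∈ (K i).edgeSet, e ∉ T'.edgeSet := by
    by_contra! h
    exact hK i i.2 (hT'.anti (edgeSet_subset_edgeSet.1 h))
  choose e heK heT using hedge
  have he : e.Injective := fun i j hij => by
    by_contra hne
    have := disjoint_edgeSet.2 (hdisj i.2 j.2 (Subtype.coe_ne_coe.2 hne))
    exact Set.disjoint_left.1 this (heK i) (hij ▸ heK j)
  have hunion : (F \ (T' ⊓ F)).edgeSet ∪ Set.range e ⊆ (G \ T').edgeSet := by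
    rw [Set.union_subset_iff, sdiff_inf_self_right]
    refine ⟨edgeSet_mono (sdiff_le_sdiff_right hFG), ?_⟩
    rintro _ ⟨i, rfl⟩
    rw [edgeSet_sdiff]
    exact ⟨edgeSet_mono (hKG i i.2) (heK i), heT i⟩
  have hdisjoint : Disjoint (F \ (T' ⊓ F)).edgeSet (Set.range e) := by
    rw [Set.disjoint_right]
    rintro _ ⟨i, rfl⟩ h
    exact Set.disjoint_left.1 (disjoint_edgeSet.2 (hFK i i.2)) (edgeSet_mono sdiff_le h) (heK i)
  rw [cyclomatic_eq_ncard_edgeSet_sdiff hTF hT hreach,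
    cyclomatic_eq_ncard_edgeSet_sdiff hT'G hT' hreach']
  have hrange : (Set.range e).ncard = s.card := by
    rw [← Nat.card_coe_set_eq, Nat.card_range_of_injective he]
    simp
  rw [← hrange]
  exact_mod_cast (Set.ncard_union_eq hdisjoint).symm.trans_le (Set.ncard_le_ncard hunion)

theorem not_isAcyclic_of_isCycles [Finite V] {K : SimpleGraph V} (hK : K.IsCycles) {v w : V}
    (hvw : K.Adj v w) : ¬ K.IsAcyclic := fun hacyc =>
  isBridge_iff.1 (isAcyclic_iff_forall_adj_isBridge.1 hacyc hvw) (hK.reachable_deleteEdges hvw)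

theorem eq_of_reachable_of_notMem_support {F : SimpleGraph V} {v w : V} (hv : v ∉ F.support)
    (h : F.Reachable v w) : v = w := by
  obtain ⟨p⟩ := h
  cases p with
  | nil => rfl
  | cons hadj _ => exact absurd ⟨_, hadj⟩ hv

theorem ncard_image_support_add_ncard_compl_support [Finite V] (F : SimpleGraph V) :
    (F.connectedComponentMk '' F.support).ncard + F.supportᶜ.ncard =
      Nat.card F.ConnectedComponent := by
  have hinj : Set.InjOn F.connectedComponentMk F.supportᶜ := fun v hv w _ h =>
    eq_of_reachable_of_notMem_support hv (ConnectedComponent.eq.1 h)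
  have hdisj : Disjoint (F.connectedComponentMk '' F.support)
      (F.connectedComponentMk '' F.supportᶜ) := by
    rw [Set.disjoint_right]
    rintro _ ⟨v, hv, rfl⟩ ⟨w, hw, h⟩
    exact hv (eq_of_reachable_of_notMem_support hv (ConnectedComponent.eq.1 h.symm) ▸ hw)
  rw [← hinj.ncard_image, ← Set.ncard_union_eq hdisj, ← Set.image_union,
    Set.union_compl_self, Set.image_univ, Set.range_eq_univ.2 fun c => c.exists_rep, Set.ncard_univ]

theorem cyclomatic_eq_sub_ncard_support_add [Fintype V] (F : SimpleGraph V) :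
    cyclomatic F = F.edgeSet.ncard - F.support.ncard +
      (F.connectedComponentMk '' F.support).ncard := by
  rw [cyclomatic, ← ncard_image_support_add_ncard_compl_support, ← Nat.card_eq_fintype_card,
    ← Set.ncard_add_ncard_compl F.support]
  push_cast
  ring

theorem isCycles_and_reachable_of_cyclomatic_le_one [Fintype V] {F : SimpleGraph V}
    (hdeg : ∀ v ∈ F.support, 2 ≤ (F.neighborSet v).ncard) (hF : cyclomatic F ≤ 1) :
    F.IsCycles ∧ ∀ v ∈ F.support, ∀ w ∈ F.support, F.Reachable v w := by
  rw [cyclomatic_eq_sub_ncard_support_add] at hF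
  have hsum : ∑ v ∈ F.support.toFinset, (F.neighborSet v).ncard = 2 * F.edgeSet.ncard := by
    rw [← sum_ncard_neighborSet]
    refine sum_subset (subset_univ _) fun v _ hv => (Set.ncard_eq_zero).2 ?_
    exact Set.eq_empty_of_forall_notMem fun w hw => hv (Set.mem_toFinset.2 ⟨w, hw⟩)
  have hle (v) (hv : v ∈ F.support.toFinset) : 2 ≤ (F.neighborSet v).ncard :=
    hdeg v (Set.mem_toFinset.1 hv)
  have hcard : ∑ v ∈ F.support.toFinset, 2 = 2 * F.support.ncard := by
    rw [sum_const, Set.ncard_eq_toFinset_card', smul_eq_mul, mul_comm]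
  have hsum_le := sum_le_sum hle
  refine ⟨fun v ⟨w, hw⟩ => ?_, fun v hv w hw => ?_⟩
  · have hpos : 0 < (F.connectedComponentMk '' F.support).ncard :=
      (Set.ncard_pos).2 ⟨_, v, ⟨w, hw⟩, rfl⟩
    exact ((sum_eq_sum_iff_of_le hle).1 (by lia) v (Set.mem_toFinset.2 ⟨w, hw⟩)).symm
  · have hle_one : (F.connectedComponentMk '' F.support).ncard ≤ 1 := by lia
    exact ConnectedComponent.eq.1 ((Set.ncard_le_one_iff).1 hle_one ⟨v, hv, rfl⟩ ⟨w, hw, rfl⟩)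

section Cycles

variable {G K : SimpleGraph V}

/-- The even cycles of `G`; `evenCycleCount G` is the cardinality of this finset. -/
noncomputable def evenCycles [Finite V] (G : SimpleGraph V) : Finset G.Subgraph :=
  (Set.toFinite {C : G.Subgraph | IsCycleSubgraph C ∧ Even C.verts.ncard}).toFinset

theorem mem_evenCycles [Finite V] {C : G.Subgraph} :
    C ∈ evenCycles G ↔ IsCycleSubgraph C ∧ Even C.verts.ncard := by
  simp [evenCycles]

theorem verts_nonempty_of_mem_evenCycles [Finite V] {C : G.Subgraph}
    (hC : C ∈ evenCycles G) : C.verts.Nonempty :=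
  (mem_evenCycles.1 hC).1.1.nonempty

theorem card_evenCycles [Finite V] (G : SimpleGraph V) :
    #(evenCycles G) = evenCycleCount G :=
  (Set.ncard_eq_toFinset_card _ _).symm

theorem IsCycleSubgraph.isCycles_spanningCoe {C : G.Subgraph} (hC : IsCycleSubgraph C) :
    C.spanningCoe.IsCycles := fun _ ⟨_, hvw⟩ => hC.2 _ (C.edge_vert hvw)

theorem IsCycleSubgraph.not_isAcyclic_spanningCoe [Finite V] {C : G.Subgraph}
    (hC : IsCycleSubgraph C) : ¬ C.spanningCoe.IsAcyclic := by
  obtain ⟨v, hv⟩ := hC.1.nonempty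
  obtain ⟨w, hvw⟩ := Set.nonempty_of_ncard_ne_zero (hC.2 v hv ▸ two_ne_zero)
  exact not_isAcyclic_of_isCycles hC.isCycles_spanningCoe hvw

/-- A connected component of a graph `K ≤ G`, as a subgraph of `G`. -/
def componentSubgraph (hKG : K ≤ G) (c : K.ConnectedComponent) : G.Subgraph where
  verts := c.supp
  Adj v w := v ∈ c.supp ∧ K.Adj v w
  adj_sub h := hKG h.2
  edge_vert h := h.1
  symm := ⟨fun _ _ h => ⟨(c.mem_supp_congr_adj h.2).1 h.1, h.2.symm⟩⟩

theorem connected_componentSubgraph (hKG : K ≤ G) (c : K.ConnectedComponent) :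
    (componentSubgraph hKG c).Connected :=
  ⟨c.connected_toSimpleGraph.mono fun v _ h => ⟨v.2, h⟩⟩

theorem isCycleSubgraph_componentSubgraph (hKG : K ≤ G) (hK : K.IsCycles) {v w : V}
    (hvw : K.Adj v w) : IsCycleSubgraph (componentSubgraph hKG (K.connectedComponentMk v)) := by
  refine ⟨connected_componentSubgraph hKG _, fun x hx => ?_⟩
  have hxK : (K.neighborSet x).Nonempty := by
    by_contra hemp
    have hxv := eq_of_reachable_of_notMem_support hemp (ConnectedComponent.eq.1 hx)
    exact hemp ⟨w, hxv ▸ hvw⟩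
  rw [← hK hxK]
  congr 1
  ext y
  exact and_iff_right hx

end Cycles

section Matchings

/-- A matching of `G`, encoded as the involution that exchanges the two ends of each of its edges
and fixes the unmatched vertices. -/
structure IsMatchingInvolution (G : SimpleGraph V) (σ : Equiv.Perm V) : Prop where
  involutive : Function.Involutive σ
  adj : ∀ v, σ v ≠ v → G.Adj v (σ v)

variable {G : SimpleGraph V} {σ τ : Equiv.Perm V}

theorem two_mul_ncard_edgeSet_of_isMatching [Finite V] {N : G.Subgraph} (hN : N.IsMatching) :
    2 * N.edgeSet.ncard = N.verts.ncard := by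
  cases nonempty_fintype V
  have hdeg (v : V) : (N.spanningCoe.neighborSet v).ncard = if v ∈ N.verts then 1 else 0 := by
    split_ifs with hv
    · obtain ⟨w, hw, huniq⟩ := hN hv
      exact Set.ncard_eq_one.2 ⟨w, Set.ext fun z => ⟨huniq z, fun h => h ▸ hw⟩⟩
    · exact (Set.ncard_eq_zero).2 (Set.eq_empty_of_forall_notMem fun w h => hv (N.edge_vert h))
  rw [← Subgraph.edgeSet_spanningCoe, ← sum_ncard_neighborSet]
  simp only [hdeg, sum_boole, Set.ncard_eq_toFinset_card', Nat.cast_id]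
  congr 1
  ext v
  simp

theorem IsMatchingInvolution.exists_isMatching [Fintype V] [DecidableEq V]
    (hσ : IsMatchingInvolution G σ) :
    ∃ N : G.Subgraph, N.IsMatching ∧ N.verts = σ.support := by
  refine ⟨{ verts := σ.support
            Adj := fun v w => σ v ≠ v ∧ σ v = w
            adj_sub := fun ⟨hv, hw⟩ => hw ▸ hσ.adj _ hv
            edge_vert := fun h => by simpa using h.1
            symm := ⟨?_⟩ }, fun v hv => ⟨σ v, ⟨by simpa using hv, rfl⟩, fun w hw => hw.2.symm⟩, rfl⟩
  rintro v _ ⟨hv, rfl⟩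
  rw [hσ.involutive]
  exact ⟨hv.symm, rfl⟩

theorem exists_isMatchingInvolution_of_isMatching [Fintype V] [DecidableEq V] {N : G.Subgraph}
    (hN : N.IsMatching) :
    ∃ σ : Equiv.Perm V, IsMatchingInvolution G σ ∧ N.verts = σ.support := by
  choose f hadj huniq using hN
  let g (v : V) : V := if hv : v ∈ N.verts then f hv else v
  have hg_mem {v : V} (hv : v ∈ N.verts) : g v = f hv := dif_pos hv
  have hg_notMem {v : V} (hv : v ∉ N.verts) : g v = v := dif_neg hv
  have hg : Function.Involutive g := fun v => by
    by_cases hv : v ∈ N.verts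
    · rw [hg_mem hv, hg_mem (hadj hv).snd_mem]
      exact (huniq _ v (hadj hv).symm).symm
    · rw [hg_notMem hv, hg_notMem hv]
  refine ⟨hg.toPerm g, ⟨hg, fun v hv => ?_⟩, Set.ext fun v => ?_⟩
  · have hvN : v ∈ N.verts := by_contra fun h => hv (hg_notMem h)
    simpa [hg_mem hvN] using (hadj hvN).adj_sub
  · by_cases hv : v ∈ N.verts
    · simpa [hv, hg_mem hv] using (hadj hv).adj_sub.ne'
    · simp [hv, hg_notMem hv]

theorem bddAbove_ncard_edgeSet_isMatching [Finite V] (G : SimpleGraph V) :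
    BddAbove {k | ∃ N : G.Subgraph, N.IsMatching ∧ N.edgeSet.ncard = k} := by
  refine ⟨Nat.card (Sym2 V), ?_⟩
  rintro _ ⟨N, -, rfl⟩
  exact Set.ncard_le_card _

theorem IsMatchingInvolution.card_support_le [Fintype V] [DecidableEq V]
    (hσ : IsMatchingInvolution G σ) : #σ.support ≤ 2 * matchingNumber G := by
  obtain ⟨N, hN, hverts⟩ := hσ.exists_isMatching
  rw [← Set.ncard_coe_finset, ← hverts, ← two_mul_ncard_edgeSet_of_isMatching hN]
  exact Nat.mul_le_mul_left 2 (le_csSup (bddAbove_ncard_edgeSet_isMatching G) ⟨N, hN, rfl⟩)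

/-- A maximum matching of `G`, encoded as an involution. -/
structure IsMaximumMatchingInvolution [Fintype V] [DecidableEq V] (G : SimpleGraph V)
    (σ : Equiv.Perm V) : Prop extends IsMatchingInvolution G σ where
  card_support : #σ.support = 2 * matchingNumber G

theorem exists_isMaximumMatchingInvolution [Fintype V] [DecidableEq V] (G : SimpleGraph V) :
    ∃ σ : Equiv.Perm V, IsMaximumMatchingInvolution G σ := by
  have hbot : (⊥ : G.Subgraph).IsMatching := fun _ hv => hv.elim
  obtain ⟨N, hN, hcard⟩ := Nat.sSup_mem (by exact ⟨_, ⊥, hbot, rfl⟩)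
    (bddAbove_ncard_edgeSet_isMatching G)
  obtain ⟨σ, hσ, hverts⟩ := exists_isMatchingInvolution_of_isMatching hN
  refine ⟨σ, hσ, ?_⟩
  rw [← Set.ncard_coe_finset, ← hverts, ← two_mul_ncard_edgeSet_of_isMatching hN, hcard,
    matchingNumber]

theorem even_ncard_of_involutive [Finite V] {f : V → V} (hf : Function.Involutive f) {s : Set V}
    (hs : Set.MapsTo f s s) (hfix : ∀ v ∈ s, f v ≠ v) : Even s.ncard := by
  cases nonempty_fintype V
  rw [Set.ncard_eq_toFinset_card', ← ZMod.natCast_eq_zero_iff_even, card_eq_sum_ones,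
    Nat.cast_sum]
  exact sum_involution (fun v _ => f v) (fun _ _ => by decide)
    (fun v hv _ => hfix v (Set.mem_toFinset.1 hv))
    (fun v hv => Set.mem_toFinset.2 (hs (Set.mem_toFinset.1 hv))) fun v _ => hf v

/-- The graph whose edges are those of the matching encoded by the involution `σ`. -/
def matchingGraph (σ : Equiv.Perm V) : SimpleGraph V := fromRel fun v w => σ v = w

theorem IsMatchingInvolution.matchingGraph_adj (hσ : IsMatchingInvolution G σ) {v w : V} :
    (matchingGraph σ).Adj v w ↔ v ≠ w ∧ σ v = w := by
  rw [matchingGraph, fromRel_adj, hσ.involutive.eq_iff, eq_comm (a := v), or_self]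

theorem IsMatchingInvolution.matchingGraph_le (hσ : IsMatchingInvolution G σ) :
    matchingGraph σ ≤ G := by
  intro v w hvw
  obtain ⟨hne, rfl⟩ := hσ.matchingGraph_adj.1 hvw
  exact hσ.adj v hne.symm

theorem IsMatchingInvolution.symmDiff_matchingGraph_adj (hσ : IsMatchingInvolution G σ)
    (hτ : IsMatchingInvolution G τ) (hfix : ∀ v, σ v = v ↔ τ v = v) {v w : V} :
    (matchingGraph σ ∆ matchingGraph τ).Adj v w ↔ σ v ≠ τ v ∧ (w = σ v ∨ w = τ v) := by
  simp only [symmDiff_def, sup_adj, sdiff_adj, hσ.matchingGraph_adj, hτ.matchingGraph_adj]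
  grind

theorem IsMatchingInvolution.isCycles_symmDiff (hσ : IsMatchingInvolution G σ)
    (hτ : IsMatchingInvolution G τ) (hfix : ∀ v, σ v = v ↔ τ v = v) :
    (matchingGraph σ ∆ matchingGraph τ).IsCycles := by
  rintro v ⟨w, hvw⟩
  have hne := ((hσ.symmDiff_matchingGraph_adj hτ hfix).1 hvw).1
  rw [← Set.ncard_pair hne]
  congr 1
  ext x
  exact (hσ.symmDiff_matchingGraph_adj hτ hfix).trans (and_iff_right hne)

theorem IsMatchingInvolution.exists_evenCycle_of_ne [Fintype V] [DecidableEq V]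
    (hσ : IsMatchingInvolution G σ) (hτ : IsMatchingInvolution G τ)
    (hfix : ∀ v, σ v = v ↔ τ v = v) (hne : σ ≠ τ) :
    ∃ C ∈ evenCycles G, C.verts ⊆ σ.support := by
  obtain ⟨v, hv⟩ := DFunLike.ne_iff.1 hne
  set K := matchingGraph σ ∆ matchingGraph τ
  have hadj {x y : V} : K.Adj x y ↔ σ x ≠ τ x ∧ (y = σ x ∨ y = τ x) :=
    hσ.symmDiff_matchingGraph_adj hτ hfix
  have hKG : K ≤ G := symmDiff_le_sup.trans (sup_le hσ.matchingGraph_le hτ.matchingGraph_le)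
  have hKσ : K.Adj v (σ v) := hadj.2 ⟨hv, .inl rfl⟩
  have hC := isCycleSubgraph_componentSubgraph hKG (hσ.isCycles_symmDiff hτ hfix) hKσ
  have hsupp (x) (hx : x ∈ (K.connectedComponentMk v).supp) : σ x ≠ τ x := by
    obtain ⟨y, -, hxy⟩ := Set.nonempty_of_ncard_ne_zero (hC.2 x hx ▸ two_ne_zero)
    exact (hadj.1 hxy).1
  have hmoved (x) (hx : x ∈ (K.connectedComponentMk v).supp) : σ x ≠ x := fun h =>
    hsupp x hx (h.trans ((hfix x).1 h).symm)
  have hmaps : Set.MapsTo σ (K.connectedComponentMk v).supp (K.connectedComponentMk v).supp :=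
    fun x hx => (ConnectedComponent.mem_supp_congr_adj _ (hadj.2 ⟨hsupp x hx, .inl rfl⟩)).1 hx
  refine ⟨_, mem_evenCycles.2 ⟨hC, even_ncard_of_involutive hσ.involutive hmaps hmoved⟩,
    fun x hx => ?_⟩
  simpa using hmoved x hx

end Matchings

section Exchange

variable [Fintype V] [DecidableEq V] {G : SimpleGraph V} {σ : Equiv.Perm V}

theorem IsMatchingInvolution.exists_unmatch (hσ : IsMatchingInvolution G σ) (X : Finset V) :
    ∃ τ : Equiv.Perm V, IsMatchingInvolution G τ ∧
      (∀ v, τ v = v ↔ σ v = v ∨ v ∈ X ∨ σ v ∈ X) ∧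
      #σ.support ≤ #τ.support + 2 * #(X ∩ σ.support) := by
  have hinv := hσ.involutive
  let f (v : V) : V := if v ∈ X ∨ σ v ∈ X then v else σ v
  have hf : Function.Involutive f := fun v => by
    have := hinv v
    grind
  have hfix (v : V) : f v = v ↔ σ v = v ∨ v ∈ X ∨ σ v ∈ X := by grind
  refine ⟨hf.toPerm f, ⟨hf, fun v hv => ?_⟩, hfix, ?_⟩
  · have := hσ.adj v
    grind [Function.Involutive.coe_toPerm]
  have hsub : σ.support ⊆ (hf.toPerm f).support ∪ ((X ∩ σ.support) ∪ (X ∩ σ.support).image σ) := by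
    intro v hv
    have := hinv v
    simp only [mem_union, mem_inter, mem_image, Equiv.Perm.mem_support,
      Function.Involutive.coe_toPerm, ne_eq, hfix] at hv ⊢
    grind
  have hunion := (card_le_card hsub).trans <| (card_union_le _ _).trans <|
    Nat.add_le_add_left (card_union_le _ _) _
  have himage := card_image_le (s := X ∩ σ.support) (f := σ)
  lia

theorem IsMatchingInvolution.swap_mul (hσ : IsMatchingInvolution G σ) {v w : V} (hv : σ v = v)
    (hw : σ w = w) (hvw : G.Adj v w) :
    IsMatchingInvolution G (Equiv.swap v w * σ) ∧
      #(Equiv.swap v w * σ).support = #σ.support + 2 := by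
  have hdisj : (Equiv.swap v w).Disjoint σ := fun x => by
    grind [Equiv.swap_apply_of_ne_of_ne]
  refine ⟨⟨fun x => ?_, fun x hx => ?_⟩, ?_⟩
  · have := hσ.involutive x
    grind [Equiv.Perm.mul_apply]
  · have := hσ.adj x
    have := hσ.involutive x
    have := hvw.symm
    grind [Equiv.Perm.mul_apply]
  · rw [hdisj.card_support_mul, Equiv.Perm.card_support_swap hvw.ne, add_comm]

/-- A vertex is inessential if some maximum matching misses it. -/
def IsInessential (G : SimpleGraph V) (v : V) : Prop :=
  ∃ σ : Equiv.Perm V, IsMaximumMatchingInvolution G σ ∧ σ v = v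

theorem exists_isInessential (h : ¬ ∃ N : G.Subgraph, N.IsPerfectMatching) :
    ∃ v, IsInessential G v := by
  obtain ⟨σ, hσ⟩ := exists_isMaximumMatchingInvolution G
  obtain ⟨N, hN, hverts⟩ := hσ.exists_isMatching
  by_contra! hcover
  refine h ⟨N, hN, fun v => ?_⟩
  rw [hverts, mem_coe, Equiv.Perm.mem_support]
  exact fun hv => hcover v ⟨σ, hσ, hv⟩

theorem IsInessential.exists_exchange {v w : V} (hv : IsInessential G v) (hvw : G.Adj v w) :
    ∃ x ≠ v, G.Adj w x ∧ IsInessential G x := by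
  obtain ⟨σ, hσ, hσv⟩ := hv
  obtain ⟨τ, hτ, hfix, hcard⟩ := hσ.exists_unmatch {w}
  obtain ⟨hρ, hρcard⟩ := hτ.swap_mul ((hfix v).2 (.inl hσv)) ((hfix w).2 (by simp)) hvw
  have hmax := hσ.card_support
  have hρ_le := hρ.card_support_le
  have hσw : σ w ≠ w := fun hσw => by
    rw [singleton_inter_of_notMem (by simpa using hσw), card_empty] at hcard
    lia
  rw [singleton_inter_of_mem (by simpa using hσw), card_singleton] at hcard
  have hne : σ w ≠ v := fun h => hvw.ne (σ.injective (hσv.trans h.symm))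
  refine ⟨σ w, hne, hσ.adj w hσw, _, ⟨hρ, by lia⟩, ?_⟩
  rw [Equiv.Perm.mul_apply, (hfix (σ w)).2 (by simp [hσ.involutive w]),
    Equiv.swap_apply_of_ne_of_ne hne hσw]

end Exchange

section Determinant

variable {n R : Type*} [CommRing R] [CharP R 2] [Fintype n] [DecidableEq n]

theorem det_eq_sum_inv_eq_self {A : Matrix n n R} (hA : A.IsSymm) :
    A.det = ∑ π : Equiv.Perm n with π⁻¹ = π, ∏ i, A (π i) i := by
  have hsign (π : Equiv.Perm n) : ((π.sign : ℤ) : R) = 1 := by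
    rcases Int.units_eq_one_or π.sign with h | h <;> simp [h, CharTwo.neg_eq]
  have hinv (π : Equiv.Perm n) : ∏ i, A (π⁻¹ i) i = ∏ i, A (π i) i := by
    rw [← Equiv.prod_comp π]
    exact prod_congr rfl fun i _ => by
      rw [← Equiv.Perm.mul_apply, inv_mul_cancel, Equiv.Perm.one_apply, hA.apply]
  have hzero : ∑ π : Equiv.Perm n with π⁻¹ ≠ π, ∏ i, A (π i) i = 0 := by
    refine sum_involution (fun π _ => π⁻¹) (fun π _ => ?_) (fun π hπ _ => (mem_filter.1 hπ).2)
      (fun π hπ => ?_) fun π _ => inv_inv π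
    · rw [hinv, CharTwo.add_self_eq_zero]
    · simpa [eq_comm] using hπ
  simp only [Matrix.det_apply', hsign, one_mul]
  rw [← sum_filter_add_sum_filter_not univ fun π : Equiv.Perm n => π⁻¹ = π, hzero, add_zero]

theorem det_adjMatrix_eq_card (K : SimpleGraph n) [DecidableRel K.Adj] :
    (K.adjMatrix R).det =
      #{π : Equiv.Perm n | IsMatchingInvolution K π ∧ ∀ v, π v ≠ v} := by
  have hiff (π : Equiv.Perm n) : (π⁻¹ = π ∧ ∀ v, K.Adj (π v) v) ↔
      IsMatchingInvolution K π ∧ ∀ v, π v ≠ v := by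
    rw [inv_eq_iff_mul_eq_one, Equiv.ext_iff]
    refine ⟨fun ⟨hπ, hadj⟩ => ?_, fun ⟨hπ, hne⟩ => ?_⟩
    · exact ⟨⟨hπ, fun v _ => (hadj v).symm⟩, fun v => (hadj v).ne⟩
    · exact ⟨hπ.involutive, fun v => (hπ.adj v (hne v)).symm⟩
  rw [det_eq_sum_inv_eq_self K.isSymm_adjMatrix, sum_filter, card_filter, Nat.cast_sum]
  refine sum_congr rfl fun π _ => ?_
  simp only [adjMatrix_apply, prod_boole, mem_univ, true_imp_iff, Nat.cast_ite, Nat.cast_one,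
    Nat.cast_zero, ← ite_and, hiff]

end Determinant

section InducedMatching

variable {G : SimpleGraph V}

theorem IsMatchingInvolution.ofSubtype {S : Set V} [DecidablePred (· ∈ S)] {π : Equiv.Perm S}
    (hπ : IsMatchingInvolution (G.induce S) π) :
    IsMatchingInvolution G (Equiv.Perm.ofSubtype π) := by
  refine ⟨fun v => ?_, fun v hv => ?_⟩
  · by_cases hvS : v ∈ S
    · rw [Equiv.Perm.ofSubtype_apply_of_mem π hvS, Equiv.Perm.ofSubtype_apply_coe, hπ.involutive]
    · simp only [Equiv.Perm.ofSubtype_apply_of_not_mem π hvS]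
  · have hvS : v ∈ S := by_contra fun h => hv (Equiv.Perm.ofSubtype_apply_of_not_mem π h)
    rw [Equiv.Perm.ofSubtype_apply_of_mem π hvS] at hv ⊢
    exact hπ.adj ⟨v, hvS⟩ fun h => hv (congrArg Subtype.val h)

variable {R : Type*} [CommRing R] [CharP R 2] [Fintype V] [DecidableEq V]

theorem IsMatchingInvolution.det_adjMatrix_induce_support {τ : Equiv.Perm V}
    (hτ : IsMatchingInvolution G τ) (hcycle : ∀ C ∈ evenCycles G, ¬ C.verts ⊆ τ.support) :
    ((G.induce (τ.support : Set V)).adjMatrix R).det = 1 := by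
  let S : Set V := τ.support
  have hmem (v : V) : v ∈ S ↔ τ v ≠ v := by rw [mem_coe, Equiv.Perm.mem_support]
  let τS : Equiv.Perm S := τ.subtypePerm fun v => by
    rw [hmem, hmem, τ.injective.ne_iff]
  have hτS : IsMatchingInvolution (G.induce S) τS :=
    ⟨fun v => Subtype.ext (hτ.involutive v), fun v _ => hτ.adj v ((hmem v).1 v.2)⟩
  have hτS_ne (v : S) : τS v ≠ v := fun h => (hmem v).1 v.2 (congrArg Subtype.val h)
  have hunique (π : Equiv.Perm S) (hπ : IsMatchingInvolution (G.induce S) π)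
      (hπ_ne : ∀ v, π v ≠ v) : π = τS := by
    have hfix (v : V) : τ v = v ↔ Equiv.Perm.ofSubtype π v = v := by
      by_cases hv : v ∈ S
      · rw [Equiv.Perm.ofSubtype_apply_of_mem π hv]
        exact iff_of_false ((hmem v).1 hv) fun h => hπ_ne ⟨v, hv⟩ (Subtype.ext h)
      · exact iff_of_true (by simpa [hmem] using hv) (Equiv.Perm.ofSubtype_apply_of_not_mem π hv)
    have heq : τ = Equiv.Perm.ofSubtype π := by
      by_contra hne
      obtain ⟨C, hC, hsub⟩ := hτ.exists_evenCycle_of_ne hπ.ofSubtype hfix hne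
      exact hcycle C hC hsub
    ext v
    simp [τS, heq]
  rw [det_adjMatrix_eq_card, card_eq_one.2 ⟨τS, ?_⟩, Nat.cast_one]
  exact eq_singleton_iff_unique_mem.2
    ⟨mem_filter.2 ⟨mem_univ _, hτS, hτS_ne⟩, fun π hπ =>
      hunique π (mem_filter.1 hπ).2.1 (mem_filter.1 hπ).2.2⟩

end InducedMatching

section Rank

/-- The Hermitian adjacency matrix, with entries in the Gaussian integers. -/
noncomputable def MixedGraph.gaussianMatrix (M : MixedGraph V) : Matrix V V GaussianInt :=
  fun u v =>
    if M.arc u v then ⟨0, 1⟩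
    else if M.arc v u then ⟨0, -1⟩
    else if M.graph.Adj u v then 1 else 0

/-- Reduction of the Gaussian integers modulo `1 + i`. -/
noncomputable def gaussianReduction : GaussianInt →+* ZMod 2 := Zsqrtd.lift ⟨1, by decide⟩

theorem MixedGraph.map_toComplex_gaussianMatrix [Fintype V] [DecidableEq V] (M : MixedGraph V) :
    M.gaussianMatrix.map GaussianInt.toComplex = M.hMatrix := by
  ext u v
  rw [Matrix.map_apply, gaussianMatrix, hMatrix]
  split_ifs <;> simp [GaussianInt.toComplex_def]

theorem MixedGraph.map_gaussianReduction_gaussianMatrix (M : MixedGraph V) :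
    M.gaussianMatrix.map gaussianReduction = M.graph.adjMatrix (ZMod 2) := by
  ext u v
  have huv := M.arc_adj u v
  have hvu := fun h => (M.arc_adj v u h).symm
  rw [Matrix.map_apply, gaussianMatrix, adjMatrix_apply]
  split_ifs <;> simp_all [gaussianReduction, Zsqrtd.lift]

variable [Fintype V] [DecidableEq V] {M : MixedGraph V}

theorem MixedGraph.det_hMatrix_ne_zero (h : (M.graph.adjMatrix (ZMod 2)).det ≠ 0) :
    M.hMatrix.det ≠ 0 := by
  rw [← map_gaussianReduction_gaussianMatrix, ← RingHom.mapMatrix_apply, ← RingHom.map_det] at h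
  rw [← map_toComplex_gaussianMatrix, ← RingHom.mapMatrix_apply, ← RingHom.map_det, Ne,
    GaussianInt.toComplex_eq_zero]
  exact fun h0 => h (by rw [h0, map_zero])

theorem MixedGraph.hRank_induce_le (M : MixedGraph V) (S : Set V) [Fintype S] :
    (M.induce S).hRank ≤ M.hRank :=
  M.hMatrix.rank_submatrix_le _ _

theorem IsMatchingInvolution.card_support_le_hRank {τ : Equiv.Perm V}
    (hτ : IsMatchingInvolution M.graph τ)
    (hcycle : ∀ C ∈ evenCycles M.graph, ¬ C.verts ⊆ τ.support) : #τ.support ≤ M.hRank := by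
  have hdet : ((M.induce τ.support).graph.adjMatrix (ZMod 2)).det ≠ 0 :=
    (hτ.det_adjMatrix_induce_support hcycle).trans_ne one_ne_zero
  calc #τ.support = Fintype.card (τ.support : Set V) := (Fintype.card_coe _).symm
    _ = (M.induce τ.support).hRank :=
      (Matrix.rank_of_det_ne_zero (MixedGraph.det_hMatrix_ne_zero hdet)).symm
    _ ≤ M.hRank := M.hRank_induce_le τ.support

end Rank

section Transversals

variable {ι α : Type*} {s : Finset ι} {A : ι → Set α}

theorem exists_finset_meets_card_le (hA : ∀ i ∈ s, (A i).Nonempty) :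
    ∃ X : Finset α, (∀ i ∈ s, ∃ v ∈ X, v ∈ A i) ∧ #X ≤ #s := by
  choose p hp using hA
  refine ⟨s.attach.image fun i => p i.1 i.2, fun i hi => ⟨p i hi, ?_, hp i hi⟩,
    card_image_le.trans card_attach.le⟩
  exact mem_image_of_mem (fun i : s => p i.1 i.2) (mem_attach s ⟨i, hi⟩)

theorem subset_of_forall_meets_card_le [DecidableEq α] (hA : ∀ i ∈ s, (A i).Nonempty)
    {T : Finset α} (h : ∀ X : Finset α, (∀ i ∈ s, ∃ v ∈ X, v ∈ A i) → #s ≤ #(X ∩ T)) {i : ι}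
    (hi : i ∈ s) : A i ⊆ T := by
  intro x hx
  by_contra hxT
  obtain ⟨X, hX, hcard⟩ := exists_finset_meets_card_le fun j (hj : j ∈ s.erase i) =>
    hA j (mem_of_mem_erase hj)
  have hle := h (insert x X) fun j hj => by
    by_cases hji : j = i
    · exact ⟨x, mem_insert_self x X, hji ▸ hx⟩
    · obtain ⟨v, hv, hvj⟩ := hX j (mem_erase.2 ⟨hji, hj⟩)
      exact ⟨v, mem_insert_of_mem hv, hvj⟩
  rw [insert_inter_of_notMem hxT] at hle
  exact (card_erase_lt_of_mem hi).not_ge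
    (hle.trans ((card_le_card inter_subset_left).trans hcard))

theorem pairwiseDisjoint_of_forall_meets_card_le (hA : ∀ i ∈ s, (A i).Nonempty)
    (h : ∀ X : Finset α, (∀ i ∈ s, ∃ v ∈ X, v ∈ A i) → #s ≤ #X) :
    (s : Set ι).PairwiseDisjoint A := by
  intro i hi j hj hij
  refine Set.disjoint_left.2 fun x hxi hxj => ?_
  obtain ⟨X, hX, hcard⟩ := exists_finset_meets_card_le fun k (hk : k ∈ (s.erase i).erase j) =>
    hA k (mem_of_mem_erase (mem_of_mem_erase hk))
  have hle := h (insert x X) fun k hk => by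
    by_cases hki : k = i
    · exact ⟨x, mem_insert_self x X, hki ▸ hxi⟩
    by_cases hkj : k = j
    · exact ⟨x, mem_insert_self x X, hkj ▸ hxj⟩
    obtain ⟨v, hv, hvk⟩ := hX k (mem_erase.2 ⟨hkj, mem_erase.2 ⟨hki, hk⟩⟩)
    exact ⟨v, mem_insert_of_mem hv, hvk⟩
  have hinsert := card_insert_le x X
  have hcard_i := card_erase_lt_of_mem hi
  have hcard_j := card_erase_lt_of_mem (mem_erase.2 ⟨hij.symm, hj⟩)
  lia

end Transversals

section RankBound

variable [Fintype V] [DecidableEq V] {M : MixedGraph V}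

theorem IsMatchingInvolution.card_support_le_hRank_add {σ : Equiv.Perm V}
    (hσ : IsMatchingInvolution M.graph σ) {X : Finset V}
    (hX : ∀ C ∈ evenCycles M.graph, ∃ v ∈ X, v ∈ C.verts) :
    #σ.support ≤ M.hRank + 2 * #(X ∩ σ.support) := by
  obtain ⟨τ, hτ, hfix, hcard⟩ := hσ.exists_unmatch X
  refine hcard.trans (Nat.add_le_add_right (hτ.card_support_le_hRank fun C hC hsub => ?_) _)
  obtain ⟨v, hvX, hvC⟩ := hX C hC
  exact Equiv.Perm.mem_support.1 (hsub hvC) ((hfix v).2 (.inr (.inl hvX)))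

theorem IsMaximumMatchingInvolution.card_evenCycles_le_card_inter {σ : Equiv.Perm V}
    (hσ : IsMaximumMatchingInvolution M.graph σ)
    (hr : M.hRank + 2 * evenCycleCount M.graph ≤ 2 * matchingNumber M.graph + 1) {X : Finset V}
    (hX : ∀ C ∈ evenCycles M.graph, ∃ v ∈ X, v ∈ C.verts) :
    #(evenCycles M.graph) ≤ #(X ∩ σ.support) := by
  have hle := hσ.card_support_le_hRank_add hX
  rw [hσ.card_support] at hle
  rw [card_evenCycles]
  lia

theorem pairwiseDisjoint_verts_evenCycles
    (hr : M.hRank + 2 * evenCycleCount M.graph ≤ 2 * matchingNumber M.graph + 1) :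
    (evenCycles M.graph : Set M.graph.Subgraph).PairwiseDisjoint Subgraph.verts := by
  obtain ⟨σ, hσ⟩ := exists_isMaximumMatchingInvolution M.graph
  exact pairwiseDisjoint_of_forall_meets_card_le (fun _ => verts_nonempty_of_mem_evenCycles)
    fun X hX => (hσ.card_evenCycles_le_card_inter hr hX).trans (card_le_card inter_subset_left)

theorem IsInessential.notMem_verts_of_mem_evenCycles {v : V} (hv : IsInessential M.graph v)
    (hr : M.hRank + 2 * evenCycleCount M.graph ≤ 2 * matchingNumber M.graph + 1)
    {C : M.graph.Subgraph} (hC : C ∈ evenCycles M.graph) : v ∉ C.verts := by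
  obtain ⟨σ, hσ, hσv⟩ := hv
  intro hvC
  exact Equiv.Perm.mem_support.1 (subset_of_forall_meets_card_le
    (fun _ => verts_nonempty_of_mem_evenCycles)
    (fun X => hσ.card_evenCycles_le_card_inter hr) hC hvC) hσv

end RankBound

section InessentialGraph

variable [Fintype V] [DecidableEq V] {G : SimpleGraph V}

/-- The graph formed by the edges of `G` having an inessential end. -/
def inessentialGraph (G : SimpleGraph V) : SimpleGraph V where
  Adj v w := G.Adj v w ∧ (IsInessential G v ∨ IsInessential G w)
  symm := ⟨fun _ _ h => ⟨h.1.symm, h.2.symm⟩⟩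
  loopless := ⟨fun _ h => h.1.ne rfl⟩

theorem inessentialGraph_le (G : SimpleGraph V) : inessentialGraph G ≤ G := fun _ _ h => h.1

theorem IsInessential.inessentialGraph_adj {v w : V} (hv : IsInessential G v) :
    (inessentialGraph G).Adj v w ↔ G.Adj v w :=
  and_iff_left (.inl hv)

theorem IsInessential.neighborSet_inessentialGraph {v : V} (hv : IsInessential G v) :
    (inessentialGraph G).neighborSet v = {w | G.Adj v w} :=
  Set.ext fun _ => hv.inessentialGraph_adj

theorem two_le_ncard_neighborSet_inessentialGraph (hnp : NoPendantVerts G) {v : V}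
    (hv : v ∈ (inessentialGraph G).support) :
    2 ≤ ((inessentialGraph G).neighborSet v).ncard := by
  obtain ⟨w, hvw, hess⟩ := hv
  by_cases hv : IsInessential G v
  · have hset := hv.neighborSet_inessentialGraph
    have hpos : 0 < {w | G.Adj v w}.ncard := (Set.ncard_pos).2 ⟨w, hvw⟩
    have hne_one := hnp v
    lia
  · have hw := hess.resolve_left hv
    obtain ⟨x, hxw, hvx, hx⟩ := hw.exists_exchange hvw.symm
    exact (Set.one_lt_ncard_iff).2 ⟨x, w, ⟨hvx, .inr hx⟩, ⟨hvw, .inr hw⟩, hxw⟩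

theorem isInessential_of_adj (hcycles : (inessentialGraph G).IsCycles) {u v w : V}
    (hu : IsInessential G u) (hv : IsInessential G v) (hvu : G.Adj v u) (hvw : G.Adj v w) :
    IsInessential G w := by
  obtain ⟨x, hxu, hvx, hx⟩ := hu.exists_exchange hvu.symm
  have hsub : {x, u} ⊆ (inessentialGraph G).neighborSet v := by
    rintro y (rfl | rfl)
    exacts [hv.inessentialGraph_adj.2 hvx, hv.inessentialGraph_adj.2 hvu]
  have hset : {x, u} = (inessentialGraph G).neighborSet v :=
    Set.eq_of_subset_of_ncard_le hsub
      ((hcycles ⟨x, hsub (by simp)⟩).trans (Set.ncard_pair hxu).symm).le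
  have hw : w ∈ ({x, u} : Set V) := hset ▸ hv.inessentialGraph_adj.2 hvw
  rcases hw with rfl | rfl <;> assumption

theorem isInessential_of_reachable (hcycles : (inessentialGraph G).IsCycles) {u v w : V}
    (hu : IsInessential G u) (hv : IsInessential G v) (hvu : G.Adj v u) (hvw : G.Reachable v w) :
    IsInessential G w := by
  rw [reachable_iff_reflTransGen] at hvw
  suffices IsInessential G w ∧ ∃ x, G.Adj w x ∧ IsInessential G x from this.1
  induction hvw with
  | refl => exact ⟨hv, u, hvu, hu⟩
  | @tail y z _ hyz ih =>
    obtain ⟨hy, x, hyx, hx⟩ := ih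
    exact ⟨isInessential_of_adj hcycles hx hy hyx hyz, y, hyz.symm, hy⟩

theorem cyclomatic_inessentialGraph_le_one {M : MixedGraph V}
    (hκ : cyclomatic M.graph ≤ evenCycleCount M.graph + 1)
    (hr : M.hRank + 2 * evenCycleCount M.graph ≤ 2 * matchingNumber M.graph + 1) :
    cyclomatic (inessentialGraph M.graph) ≤ 1 := by
  have hdisj : (evenCycles M.graph : Set M.graph.Subgraph).PairwiseDisjoint
      Subgraph.spanningCoe := by
    intro C hC D hD hCD
    refine disjoint_left.2 fun v w hCvw hDvw => ?_
    exact Set.disjoint_left.1 (pairwiseDisjoint_verts_evenCycles hr hC hD hCD)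
      (C.edge_vert hCvw) (D.edge_vert hDvw)
  have hF (C) (hC : C ∈ evenCycles M.graph) :
      Disjoint (inessentialGraph M.graph) C.spanningCoe := by
    refine disjoint_left.2 fun v w hFvw hCvw => ?_
    rcases hFvw.2 with hv | hw
    · exact hv.notMem_verts_of_mem_evenCycles hr hC (C.edge_vert hCvw)
    · exact hw.notMem_verts_of_mem_evenCycles hr hC (C.edge_vert hCvw.symm)
  have hle := cyclomatic_add_card_le (inessentialGraph_le M.graph)
    (fun C _ => C.spanningCoe_le)
    (fun C hC => (mem_evenCycles.1 hC).1.not_isAcyclic_spanningCoe) hdisj hF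
  rw [card_evenCycles] at hle
  lia

end InessentialGraph

section OddComponent

theorem even_ncard_support_of_isBipartiteWith [Finite V] {F : SimpleGraph V} (hF : F.IsCycles)
    {s t : Set V} (hst : F.IsBipartiteWith s t) : Even F.support.ncard := by
  cases nonempty_fintype V
  let P (r : Set V) : Finset V := {v | v ∈ r ∧ v ∈ F.support}
  have hsum (r : Set V) : ∑ v ∈ P r, F.degree v = 2 * #(P r) := by
    rw [mul_comm, sum_const_nat fun v hv => ?_]
    rw [← hF (mem_filter.1 hv).2.2, Set.ncard_eq_toFinset_card', Set.toFinset_card,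
      card_neighborSet_eq_degree]
  have hdisj : Disjoint (P s) (P t) := disjoint_filter.2 fun v _ hs ht =>
    Set.disjoint_left.1 hst.disjoint hs.1 ht.1
  have hPst : F.IsBipartiteWith (P s) (P t) := by
    refine ⟨disjoint_coe.2 hdisj, fun v w hvw => ?_⟩
    have hv : v ∈ F.support := ⟨w, hvw⟩
    have hw : w ∈ F.support := ⟨v, hvw.symm⟩
    simpa [P, hv, hw] using hst.mem_of_adj hvw
  have hsupp : F.support = ↑(P s ∪ P t) := by
    ext v
    suffices v ∈ F.support → v ∈ s ∨ v ∈ t by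
      simpa [P, ← or_and_right] using this
    rintro ⟨w, hvw⟩
    exact (hst.mem_of_adj hvw).imp And.left And.left
  have heq := isBipartiteWith_sum_degrees_eq hPst
  rw [hsum, hsum] at heq
  rw [hsupp, Set.ncard_coe_finset, card_union_of_disjoint hdisj]
  exact ⟨#(P t), by lia⟩

theorem supp_connectedComponentMk_eq_support {F : SimpleGraph V} {v : V} (hv : v ∈ F.support)
    (hreach : ∀ v ∈ F.support, ∀ w ∈ F.support, F.Reachable v w) :
    (F.connectedComponentMk v).supp = F.support := by
  ext w
  refine ⟨fun hw => ?_, fun hw => ConnectedComponent.sound (hreach w hw v hv)⟩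
  by_contra hw'
  exact hw' (eq_of_reachable_of_notMem_support hw' (ConnectedComponent.exact hw) ▸ hv)

theorem isCycleMG_comp {M : MixedGraph V} {c : M.graph.ConnectedComponent}
    (hc : ∀ v ∈ c.supp, {w | M.graph.Adj v w}.ncard = 2) : IsCycleMG (M.comp c) := by
  refine ⟨⟨Subgraph.topIso.connected_iff.2 c.connected_toSimpleGraph⟩, ?_⟩
  rintro ⟨v, hv⟩ -
  rw [← hc v hv, ← Set.ncard_image_of_injective _ Subtype.val_injective]
  congr 1
  ext w
  refine ⟨?_, fun hvw => ⟨⟨w, (c.mem_supp_congr_adj hvw).1 hv⟩, hvw, rfl⟩⟩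
  rintro ⟨x, hvx, rfl⟩
  exact hvx

variable [Fintype V] [DecidableEq V]

theorem odd_ncard_support_inessentialGraph {M : MixedGraph V} {v w : V}
    (hr : M.hRank + 2 * evenCycleCount M.graph ≤ 2 * matchingNumber M.graph + 1)
    (hcycles : (inessentialGraph M.graph).IsCycles)
    (hreach : ∀ v ∈ (inessentialGraph M.graph).support,
      ∀ w ∈ (inessentialGraph M.graph).support, (inessentialGraph M.graph).Reachable v w)
    (hv : IsInessential M.graph v) (hvw : M.graph.Adj v w) :
    Odd (inessentialGraph M.graph).support.ncard := by
  have hFvw := hv.inessentialGraph_adj.2 hvw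
  have hC := isCycleSubgraph_componentSubgraph (inessentialGraph_le M.graph) hcycles hFvw
  have hvF := (mem_support _).2 ⟨w, hFvw⟩
  rw [← supp_connectedComponentMk_eq_support hvF hreach, ← Nat.not_even_iff_odd]
  exact fun heven => hv.notMem_verts_of_mem_evenCycles hr (mem_evenCycles.2 ⟨hC, heven⟩)
    ConnectedComponent.connectedComponentMk_mem

theorem exists_adj_isInessential {G : SimpleGraph V} (hcycles : (inessentialGraph G).IsCycles)
    (hodd : Odd (inessentialGraph G).support.ncard) :
    ∃ v w, G.Adj v w ∧ IsInessential G v ∧ IsInessential G w := by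
  by_contra! hindep
  refine Nat.not_even_iff_odd.2 hodd (even_ncard_support_of_isBipartiteWith hcycles
    (s := {v | IsInessential G v}) (t := {v | ¬ IsInessential G v})
    ⟨Set.disjoint_left.2 fun _ hs ht => ht hs, fun v w ⟨hvw, hess⟩ => ?_⟩)
  rcases hess with hv | hw
  · exact .inl ⟨hv, hindep v w hvw hv⟩
  · exact .inr ⟨hindep w v hvw.symm hw, hw⟩

theorem perfectMatching_or_oddCycleComponent_general {M : MixedGraph V}
    (hnp : NoPendantVerts M.graph) (hni : ∀ v : V, {w | M.graph.Adj v w}.ncard ≠ 0)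
    (hκ : cyclomatic M.graph ≤ evenCycleCount M.graph + 1)
    (hr : M.hRank + 2 * evenCycleCount M.graph ≤ 2 * matchingNumber M.graph + 1) :
    (∃ N : M.graph.Subgraph, N.IsPerfectMatching) ∨
      ∃ c : M.graph.ConnectedComponent, IsCycleMG (M.comp c) ∧ Odd (Nat.card c.supp) := by
  refine or_iff_not_imp_left.2 fun hpm => ?_
  obtain ⟨hcycles, hreach⟩ := isCycles_and_reachable_of_cyclomatic_le_one
    (fun _ => two_le_ncard_neighborSet_inessentialGraph hnp)
    (cyclomatic_inessentialGraph_le_one hκ hr)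
  obtain ⟨v, hv⟩ := exists_isInessential hpm
  obtain ⟨w, hvw⟩ := Set.nonempty_of_ncard_ne_zero (hni v)
  have hodd := odd_ncard_support_inessentialGraph hr hcycles hreach hv hvw
  obtain ⟨a, b, hab, ha, hb⟩ := exists_adj_isInessential hcycles hodd
  set c := M.graph.connectedComponentMk a
  have hinessential (x) (hx : x ∈ c.supp) : IsInessential M.graph x :=
    isInessential_of_reachable hcycles hb ha hab (ConnectedComponent.exact hx).symm
  have hsupp : c.supp = (inessentialGraph M.graph).support := by
    ext x
    refine ⟨fun hx => ?_, fun hx => ?_⟩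
    · obtain ⟨y, hxy⟩ := Set.nonempty_of_ncard_ne_zero (hni x)
      exact ⟨y, (hinessential x hx).inessentialGraph_adj.2 hxy⟩
    · have ha' := (mem_support _).2 ⟨b, ha.inessentialGraph_adj.2 hab⟩
      exact ConnectedComponent.sound ((hreach x hx a ha').mono (inessentialGraph_le M.graph))
  refine ⟨c, isCycleMG_comp fun x hx => ?_, ?_⟩
  · rw [← (hinessential x hx).neighborSet_inessentialGraph]
    exact hcycles (hsupp ▸ hx : x ∈ (inessentialGraph M.graph).support)
  · rwa [Nat.card_coe_set_eq, hsupp]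

end OddComponent

/-- Let G̃ be a mixed graph whose underlying graph has no pendant
and no isolated vertices, with κ(G) = c(G) − 1 and c(G) ≥ 2. If
r(G̃) = 2m(G) − 2κ(G) + s with s ∈ {0,1}, then either G has a perfect matching or
G has a connected component which is an odd cycle. -/
theorem perfectMatching_or_oddCycleComponent
    {V : Type u} [Fintype V] [DecidableEq V] (M : MixedGraph V)
    (hnp : NoPendantVerts M.graph)
    (hni : ∀ v : V, {w | M.graph.Adj v w}.ncard ≠ 0)
    (hκ : (evenCycleCount M.graph : ℤ) = cyclomatic M.graph - 1)
    (hc : 2 ≤ cyclomatic M.graph) (s : ℤ) (hs : s = 0 ∨ s = 1)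
    (hr : (M.hRank : ℤ) =
      2 * (matchingNumber M.graph : ℤ) - 2 * (evenCycleCount M.graph : ℤ) + s) :
    (∃ N : M.graph.Subgraph, N.IsPerfectMatching) ∨
      ∃ c : M.graph.ConnectedComponent,
        IsCycleMG (M.comp c) ∧ Odd (Nat.card c.supp) :=
  perfectMatching_or_oddCycleComponent_general hnp hni (by lia) (by lia)

end MixedPaper
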